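/- arXiv:1610.05033 — 2 statements merged into one kernel-verified Lean document; each statement's English description precedes it below -/
import Mathlib

section
/- Fix n ≥ 0. Let Φ₄(n)⁺ be the (2n+2)×(2n+2) lower-triangular matrix over k[X,Y], with rows and columns indexed 0,…,2n+1, whose only nonzero entries are: (0,0) = z₃; (1,0) = −z₄, (1,1) = z₁z₄; for 1 ≤ j ≤ n: (2j, 2j−1) = −z₁z₃, (2j, 2j) = z₂z₃, and (2j+1, 2j−1) = z₁z₄, (2j+1, 2j) = −z₂z₄, (2j+1, 2j+1) = z₁z₄. Then det Φ₄(n)⁺ = z₁ⁿ⁺¹ z₂ⁿ z₃ⁿ⁺¹ z₄ⁿ⁺¹, and there exists a (2n+2)×(2n+2) matrix Ψ with entries in k[X,Y] such that Φ₄(n)⁺·Ψ = Ψ·Φ₄(n)⁺ = F·I₂ₙ₊₂. -/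
theorem band_sum {R : Type*} [CommRing R] (N : ℕ) (a b c : R) (f g : ℕ → R) (i : ℕ) (hi : i < N)
    (hf : ∀ j, f j = (if j = i then a else 0) + (if 1 ≤ i ∧ j = i - 1 then b else 0)
      + (if 2 ≤ i ∧ j = i - 2 then c else 0)) :
    ∑ j : Fin N, f j.val * g j.val = a * g i + (if 1 ≤ i then b * g (i - 1) else 0)
      + (if 2 ≤ i then c * g (i - 2) else 0) := by
  rw [Fin.sum_univ_eq_sum_range (fun j => f j * g j) N]
  have e1 : i - 1 < N := by omega
  have e2 : i - 2 < N := by omega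
  simp only [hf, add_mul, ite_and, ite_mul, zero_mul, Finset.sum_add_distrib]
  by_cases p : 1 ≤ i <;> by_cases q : 2 ≤ i <;> simp [p, q, hi, e1, e2]

/-- entries of the matrix of relations -/
def phiE {R : Type*} [CommRing R] (z1 z2 z3 z4 : R) (i j : ℕ) : R :=
      if i = 0 then (if j = 0 then z3 else 0)
      else if i = 1 then
        (if j = 0 then -z4 else if j = 1 then z1 * z4 else 0)
      else if i % 2 = 0 then
        (if j = i - 1 then -(z1 * z3)
         else if j = i then z2 * z3 else 0)
      else
        (if j = i - 2 then z1 * z4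
         else if j = i - 1 then -(z2 * z4)
         else if j = i then z1 * z4 else 0)

/-- entries of the complementary factor -/
def psiE {R : Type*} [CommRing R] (z1 z2 z3 z4 : R) (i j : ℕ) : R :=
      if i = 0 then (if j = 0 then z1 * z2 * z4 else 0)
      else if i % 2 = 0 then
        (if j = i - 2 then z1 * z4
         else if j = i - 1 then z1 * z3
         else if j = i then z1 * z4 else 0)
      else
        (if j = i - 1 then z2 * z4
         else if j = i then z2 * z3 else 0)

theorem nat_cases4 (i : ℕ) : i = 0 ∨ i = 1 ∨ (∃ m, i = 2 * m + 2) ∨ (∃ m, i = 2 * m + 3) := by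
  rcases Nat.even_or_odd' i with ⟨m, h | h⟩
  · rcases m with _ | m
    · omega
    · exact Or.inr (Or.inr (Or.inl ⟨m, by omega⟩))
  · rcases m with _ | m
    · omega
    · exact Or.inr (Or.inr (Or.inr ⟨m, by omega⟩))

theorem phi_r0 {R : Type*} [CommRing R] (z1 z2 z3 z4 : R) (j : ℕ) :
    phiE z1 z2 z3 z4 0 j = if j = 0 then z3 else 0 := by
  simp [phiE]

theorem phi_r1 {R : Type*} [CommRing R] (z1 z2 z3 z4 : R) (j : ℕ) :
    phiE z1 z2 z3 z4 1 j = if j = 0 then -z4 else if j = 1 then z1 * z4 else 0 := by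
  simp [phiE]

theorem phi_even {R : Type*} [CommRing R] (z1 z2 z3 z4 : R) (m j : ℕ) :
    phiE z1 z2 z3 z4 (2 * m + 2) j =
      if j = 2 * m + 1 then -(z1 * z3) else if j = 2 * m + 2 then z2 * z3 else 0 := by
  unfold phiE
  rw [if_neg (by omega), if_neg (by omega), if_pos (by omega)]
  rfl

theorem phi_odd {R : Type*} [CommRing R] (z1 z2 z3 z4 : R) (m j : ℕ) :
    phiE z1 z2 z3 z4 (2 * m + 3) j =
      if j = 2 * m + 1 then z1 * z4 else if j = 2 * m + 2 then -(z2 * z4)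
      else if j = 2 * m + 3 then z1 * z4 else 0 := by
  unfold phiE
  rw [if_neg (by omega), if_neg (by omega), if_neg (by omega)]
  rfl

theorem psi_r0 {R : Type*} [CommRing R] (z1 z2 z3 z4 : R) (j : ℕ) :
    psiE z1 z2 z3 z4 0 j = if j = 0 then z1 * z2 * z4 else 0 := by
  simp [psiE]

theorem psi_even {R : Type*} [CommRing R] (z1 z2 z3 z4 : R) (m j : ℕ) :
    psiE z1 z2 z3 z4 (2 * m + 2) j =
      if j = 2 * m then z1 * z4 else if j = 2 * m + 1 then z1 * z3
      else if j = 2 * m + 2 then z1 * z4 else 0 := by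
  unfold psiE
  rw [if_neg (by omega), if_pos (by omega)]
  rfl

theorem psi_odd {R : Type*} [CommRing R] (z1 z2 z3 z4 : R) (m j : ℕ) :
    psiE z1 z2 z3 z4 (2 * m + 1) j =
      if j = 2 * m then z2 * z4 else if j = 2 * m + 1 then z2 * z3 else 0 := by
  unfold psiE
  rw [if_neg (by omega), if_neg (by omega)]
  rfl

theorem psi_odd3 {R : Type*} [CommRing R] (z1 z2 z3 z4 : R) (m j : ℕ) :
    psiE z1 z2 z3 z4 (2 * m + 3) j =
      if j = 2 * m + 2 then z2 * z4 else if j = 2 * m + 3 then z2 * z3 else 0 :=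
  psi_odd z1 z2 z3 z4 (m + 1) j

theorem psi_r1 {R : Type*} [CommRing R] (z1 z2 z3 z4 : R) (j : ℕ) :
    psiE z1 z2 z3 z4 1 j = if j = 0 then z2 * z4 else if j = 1 then z2 * z3 else 0 :=
  psi_odd z1 z2 z3 z4 0 j

theorem phi_sum {R : Type*} [CommRing R] (z1 z2 z3 z4 : R) (N i : ℕ) (g : ℕ → R) (hi : i < N) :
    ∑ j : Fin N, phiE z1 z2 z3 z4 i j.val * g j.val = 
      phiE z1 z2 z3 z4 i i * g i
      + (if 1 ≤ i then phiE z1 z2 z3 z4 i (i-1) * g (i - 1) else 0)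
      + (if 2 ≤ i then phiE z1 z2 z3 z4 i (i-2) * g (i - 2) else 0) := by
  apply band_sum N _ _ _ _ g i hi
  intro j
  rcases nat_cases4 i with rfl | rfl | ⟨m, rfl⟩ | ⟨m, rfl⟩
  · simp [phi_r0]
  · simp only [phi_r1]; grind
  · simp only [phi_even]; grind
  · simp only [phi_odd]; grind

theorem psi_sum {R : Type*} [CommRing R] (z1 z2 z3 z4 : R) (N i : ℕ) (g : ℕ → R) (hi : i < N) :
    ∑ j : Fin N, psiE z1 z2 z3 z4 i j.val * g j.val = 
      psiE z1 z2 z3 z4 i i * g i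
      + (if 1 ≤ i then psiE z1 z2 z3 z4 i (i-1) * g (i - 1) else 0)
      + (if 2 ≤ i then psiE z1 z2 z3 z4 i (i-2) * g (i - 2) else 0) := by
  apply band_sum N _ _ _ _ g i hi
  intro j
  rcases nat_cases4 i with rfl | rfl | ⟨m, rfl⟩ | ⟨m, rfl⟩
  · simp [psi_r0]
  · simp only [psi_r1]; grind
  · simp only [psi_even]; grind
  · simp only [psi_odd3]; grind

theorem phi_psi {R : Type*} [CommRing R] (z1 z2 z3 z4 : R) (N i l : ℕ) (hi : i < N) :
    ∑ j : Fin N, phiE z1 z2 z3 z4 i j.val * psiE z1 z2 z3 z4 j.val l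
      = if i = l then z1 * z2 * z3 * z4 else 0 := by
  rw [phi_sum z1 z2 z3 z4 N i (fun j => psiE z1 z2 z3 z4 j l) hi]
  rcases nat_cases4 i with rfl | rfl | ⟨m, rfl⟩ | ⟨m, rfl⟩
  · simp [phi_r0, psi_r0]; grind
  · simp [phi_r1, psi_r0, psi_r1]; grind
  · simp [phi_even, psi_odd, psi_even]; grind
  · simp [phi_odd, psi_odd, psi_even, psi_odd3]; grind

theorem psi_phi {R : Type*} [CommRing R] (z1 z2 z3 z4 : R) (N i l : ℕ) (hi : i < N) :
    ∑ j : Fin N, psiE z1 z2 z3 z4 i j.val * phiE z1 z2 z3 z4 j.val l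
      = if i = l then z1 * z2 * z3 * z4 else 0 := by
  rw [psi_sum z1 z2 z3 z4 N i (fun j => phiE z1 z2 z3 z4 j l) hi]
  rcases nat_cases4 i with rfl | rfl | ⟨m, rfl⟩ | ⟨m, rfl⟩
  · simp [phi_r0, psi_r0]; grind
  · simp [psi_r1, phi_r0, phi_r1]; grind
  · rcases m with _ | m
    · have := phi_even z1 z2 z3 z4 0 l
      have := psi_even z1 z2 z3 z4 0
      simp_all [phi_r0, phi_r1]; grind
    · have h2 : 2 * (m + 1) = 2 * m + 2 := by ring
      have h3 : 2 * (m + 1) + 1 = 2 * m + 3 := by ring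
      simp [psi_even, phi_even]
      rw [h3, h2, phi_odd, phi_even]
      grind
  · simp [psi_odd3, phi_even, phi_odd]; grind

theorem phi_diag {R : Type*} [CommRing R] (z1 z2 z3 z4 : R) (n : ℕ) :
    ∏ i ∈ Finset.range (2 * n + 2), phiE z1 z2 z3 z4 i i
      = z1 ^ (n + 1) * z2 ^ n * z3 ^ (n + 1) * z4 ^ (n + 1) := by
  induction n with
  | zero => simp [Finset.prod_range_succ, phiE]; ring
  | succ n ih =>
    rw [show 2 * (n + 1) + 2 = 2 * n + 2 + 1 + 1 by ring, Finset.prod_range_succ,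
      Finset.prod_range_succ, ih]
    have e1 : phiE z1 z2 z3 z4 (2 * n + 2) (2 * n + 2) = z2 * z3 := by
      simp [phi_even]
    have e2 : phiE z1 z2 z3 z4 (2 * n + 2 + 1) (2 * n + 2 + 1) = z1 * z4 := by
      simp [phi_odd]
    rw [e1, e2]
    ring

/-- For `n ≥ 0`, the `(2n+2)×(2n+2)` matrix of relations `Φ₄(n)⁺` of `M₄(n)⁺` has
determinant `z₁ⁿ⁺¹z₂ⁿz₃ⁿ⁺¹z₄ⁿ⁺¹` and is part of a matrix factorization of `F`. -/
theorem stmt_15 {k : Type*} [Field k] (lam : k) (h0 : lam ≠ 0) (h1 : lam ≠ 1)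
    (z1 z2 z3 z4 F : MvPolynomial (Fin 2) k)
    (hz1 : z1 = MvPolynomial.X 1) (hz2 : z2 = MvPolynomial.X 0)
    (hz3 : z3 = MvPolynomial.X 0 - MvPolynomial.X 1)
    (hz4 : z4 = MvPolynomial.X 0 - MvPolynomial.C lam * MvPolynomial.X 1)
    (hF : F = z1 * z2 * z3 * z4)
    (n : ℕ)
    (Φ : Matrix (Fin (2 * n + 2)) (Fin (2 * n + 2)) (MvPolynomial (Fin 2) k))
    (hΦ : ∀ i j : Fin (2 * n + 2), Φ i j =
      if i.val = 0 then (if j.val = 0 then z3 else 0)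
      else if i.val = 1 then
        (if j.val = 0 then -z4 else if j.val = 1 then z1 * z4 else 0)
      else if i.val % 2 = 0 then
        (if j.val = i.val - 1 then -(z1 * z3)
         else if j.val = i.val then z2 * z3 else 0)
      else
        (if j.val = i.val - 2 then z1 * z4
         else if j.val = i.val - 1 then -(z2 * z4)
         else if j.val = i.val then z1 * z4 else 0)) :
    Φ.det = z1 ^ (n + 1) * z2 ^ n * z3 ^ (n + 1) * z4 ^ (n + 1) ∧
    ∃ Ψ : Matrix (Fin (2 * n + 2)) (Fin (2 * n + 2)) (MvPolynomial (Fin 2) k),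
      Φ * Ψ = F • (1 : Matrix (Fin (2 * n + 2)) (Fin (2 * n + 2)) (MvPolynomial (Fin 2) k)) ∧
      Ψ * Φ = F • (1 : Matrix (Fin (2 * n + 2)) (Fin (2 * n + 2)) (MvPolynomial (Fin 2) k)) := by
  clear hz1 hz2 hz3 hz4
  have hΦ' : ∀ i j : Fin (2 * n + 2), Φ i j = phiE z1 z2 z3 z4 i.val j.val := hΦ
  refine ⟨?_, Matrix.of fun i j => psiE z1 z2 z3 z4 i.val j.val, ?_, ?_⟩
  · rw [Matrix.det_of_isLowerTriangular, ← phi_diag,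
      ← Fin.prod_univ_eq_prod_range (fun i => phiE z1 z2 z3 z4 i i)]
    · exact Finset.prod_congr rfl fun i _ => hΦ' i i
    · intro i j hij
      have hij' : i.val < j.val := hij
      rw [hΦ']
      generalize i.val = a at *
      generalize j.val = b at *
      rcases nat_cases4 a with rfl | rfl | ⟨m, rfl⟩ | ⟨m, rfl⟩
      · rw [phi_r0, if_neg (by omega)]
      · rw [phi_r1, if_neg (by omega), if_neg (by omega)]
      · rw [phi_even, if_neg (by omega), if_neg (by omega)]
      · rw [phi_odd, if_neg (by omega), if_neg (by omega), if_neg (by omega)]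
  · ext1 i l
    simp only [Matrix.mul_apply, hΦ', Matrix.of_apply, Matrix.smul_apply, Matrix.one_apply]
    rw [phi_psi _ _ _ _ _ _ _ i.isLt, hF]
    simp [Fin.ext_iff]
  · ext1 i l
    simp only [Matrix.mul_apply, hΦ', Matrix.of_apply, Matrix.smul_apply, Matrix.one_apply]
    rw [psi_phi _ _ _ _ _ _ _ i.isLt, hF]
    simp [Fin.ext_iff]
end

section
/- Fix n ≥ 1. Let Φ₆(n) be the (2n+1)×(2n+1) matrix over k[X,Y] obtained from Φ₂(n)⁺ by replacing its last row (0,…,0,−z₁z₃, z₂z₃) with (0,…,0,−z₁, z₂) (division of the last row by z₃), where Φ₂(n)⁺ is the lower-triangular matrix with rows and columns indexed 0,…,2n whose only nonzero entries are: (0,0) = z₃; (1,0) = −z₄, (1,1) = z₁z₄; for 1 ≤ j ≤ n: (2j, 2j−1) = −z₁z₃, (2j, 2j) = z₂z₃; for 1 ≤ j ≤ n−1: (2j+1, 2j−1) = z₁z₄, (2j+1, 2j) = −z₂z₄, (2j+1, 2j+1) = z₁z₄. Then there exists a (2n+1)×(2n+1) matrix Ψ with entries in k[X,Y] such that Φ₆(n)·Ψ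 = Ψ·Φ₆(n) = F·I₂ₙ₊₁. -/
set_option maxHeartbeats 4000000

/-- A left matrix factor of a nonzero scalar is also a right factor, over a domain. -/
theorem mf_comm {R : Type*} [CommRing R] [IsDomain R] {m : ℕ}
    (A B : Matrix (Fin m) (Fin m) R) (F : R) (hF : F ≠ 0)
    (h : A * B = F • (1 : Matrix (Fin m) (Fin m) R)) :
    B * A = F • (1 : Matrix (Fin m) (Fin m) R) := by
  have hd : A.det ≠ 0 := by
    intro h0
    have h2 := congrArg Matrix.det h
    rw [Matrix.det_mul, h0, zero_mul, Matrix.det_smul, Matrix.det_one, mul_one] at h2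
    exact pow_ne_zero _ hF h2.symm
  have h3 : A * (B * A) = A * (F • (1 : Matrix (Fin m) (Fin m) R)) := by
    rw [← Matrix.mul_assoc, h]
    simp
  have h4 := congrArg (fun M => A.adjugate * M) h3
  simp only [← Matrix.mul_assoc A.adjugate, Matrix.adjugate_mul, Matrix.smul_mul,
    Matrix.one_mul] at h4
  ext i j
  have h5 := congrFun (congrFun h4 i) j
  simp only [Matrix.smul_apply, smul_eq_mul] at h5 ⊢
  exact mul_left_cancel₀ hd h5

/-- A row supported in one position. -/
theorem row_one {R : Type*} [CommRing R] {m : ℕ} (f : Fin m → R) (g : ℕ → R) (p : ℕ)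
    (a : R) (hp : p < m) (hf : ∀ j : Fin m, f j = if j.val = p then a else 0) :
    ∑ j : Fin m, f j * g j.val = a * g p := by
  rw [Finset.sum_eq_single (⟨p, hp⟩ : Fin m)]
  · simp [hf]
  · intro b _ hb
    have : b.val ≠ p := fun h => hb (Fin.ext h)
    simp [hf, this]
  · simp

/-- A row supported in two positions. -/
theorem row_two {R : Type*} [CommRing R] {m : ℕ} (f : Fin m → R) (g : ℕ → R) (p q : ℕ)
    (a b : R) (hp : p < m) (hq : q < m) (hpq : p ≠ q)
    (hf : ∀ j : Fin m, f j = if j.val = p then a else if j.val = q then b else 0) :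
    ∑ j : Fin m, f j * g j.val = a * g p + b * g q := by
  rw [← row_one (fun j : Fin m => if j.val = p then a else 0) g p a hp (fun _ => rfl),
    ← row_one (fun j : Fin m => if j.val = q then b else 0) g q b hq (fun _ => rfl),
    ← Finset.sum_add_distrib]
  refine Finset.sum_congr rfl fun j _ => ?_
  rw [hf]
  split_ifs <;> first | omega | simp

/-- A row supported in three positions. -/
theorem row_three {R : Type*} [CommRing R] {m : ℕ} (f : Fin m → R) (g : ℕ → R) (p q r : ℕ)
    (a b c : R) (hp : p < m) (hq : q < m) (hr : r < m) (hpq : p ≠ q) (hpr : p ≠ r)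
    (hqr : q ≠ r)
    (hf : ∀ j : Fin m, f j =
      if j.val = p then a else if j.val = q then b else if j.val = r then c else 0) :
    ∑ j : Fin m, f j * g j.val = a * g p + b * g q + c * g r := by
  rw [← row_two (fun j : Fin m => if j.val = p then a else if j.val = q then b else 0) g p q
      a b hp hq hpq (fun _ => rfl),
    ← row_one (fun j : Fin m => if j.val = r then c else 0) g r c hr (fun _ => rfl),
    ← Finset.sum_add_distrib]
  refine Finset.sum_congr rfl fun j _ => ?_
  rw [hf]
  split_ifs <;> first | omega | simp

/-- The cofactor matrix, with natural number indices. -/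
def psiN {R : Type*} [CommRing R] (z1 z2 z3 z4 : R) (n i c : ℕ) : R :=
  if c = 2 * n then (if i = c then z1 * z3 * z4 else 0)
  else if c % 2 = 1 then (if i = c then z2 * z3 else if i = c + 1 then z1 * z3 else 0)
  else if i = c then (if c = 0 then z1 * z2 * z4 else z1 * z4)
  else if i = c + 1 then z2 * z4
  else if i = c + 2 then z1 * z4 else 0

/-- For `n ≥ 1`, the matrix `Φ₆(n)`, obtained from `Φ₂(n)⁺` by dividing the last
row `(0,…,0,−z₁z₃,z₂z₃)` by `z₃` (so it becomes `(0,…,0,−z₁,z₂)`), is part of a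
matrix factorization of `F`. -/
theorem stmt_17 {k : Type*} [Field k] (lam : k) (h0 : lam ≠ 0) (h1 : lam ≠ 1)
    (z1 z2 z3 z4 F : MvPolynomial (Fin 2) k)
    (hz1 : z1 = MvPolynomial.X 1) (hz2 : z2 = MvPolynomial.X 0)
    (hz3 : z3 = MvPolynomial.X 0 - MvPolynomial.X 1)
    (hz4 : z4 = MvPolynomial.X 0 - MvPolynomial.C lam * MvPolynomial.X 1)
    (hF : F = z1 * z2 * z3 * z4)
    (n : ℕ) (hn : 1 ≤ n)
    (Φ₂ Φ₆ : Matrix (Fin (2 * n + 1)) (Fin (2 * n + 1)) (MvPolynomial (Fin 2) k))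
    (hΦ₂ : ∀ i j : Fin (2 * n + 1), Φ₂ i j =
      if i.val = 0 then (if j.val = 0 then z3 else 0)
      else if i.val = 1 then
        (if j.val = 0 then -z4 else if j.val = 1 then z1 * z4 else 0)
      else if i.val % 2 = 0 then
        (if j.val = i.val - 1 then -(z1 * z3)
         else if j.val = i.val then z2 * z3 else 0)
      else
        (if j.val = i.val - 2 then z1 * z4
         else if j.val = i.val - 1 then -(z2 * z4)
         else if j.val = i.val then z1 * z4 else 0))
    (hΦ₆ : ∀ i j : Fin (2 * n + 1), Φ₆ i j =
      if i.val = 2 * n then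
        (if j.val = 2 * n - 1 then -z1 else if j.val = 2 * n then z2 else 0)
      else Φ₂ i j) :
    ∃ Ψ : Matrix (Fin (2 * n + 1)) (Fin (2 * n + 1)) (MvPolynomial (Fin 2) k),
      Φ₆ * Ψ = F • (1 : Matrix (Fin (2 * n + 1)) (Fin (2 * n + 1)) (MvPolynomial (Fin 2) k)) ∧
      Ψ * Φ₆ = F • (1 : Matrix (Fin (2 * n + 1)) (Fin (2 * n + 1)) (MvPolynomial (Fin 2) k)) := by
  have hF0 : F ≠ 0 := by
    have e1 : z1 ≠ 0 := by rw [hz1]; exact MvPolynomial.X_ne_zero _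
    have e2 : z2 ≠ 0 := by rw [hz2]; exact MvPolynomial.X_ne_zero _
    have e3 : z3 ≠ 0 := by
      intro h
      have := congrArg (MvPolynomial.eval ![(1 : k), 0]) h
      simp [hz3] at this
    have e4 : z4 ≠ 0 := by
      intro h
      have := congrArg (MvPolynomial.eval ![(1 : k), 0]) h
      simp [hz4] at this
    rw [hF]
    exact mul_ne_zero (mul_ne_zero (mul_ne_zero e1 e2) e3) e4
  clear hz1 hz2 hz3 hz4
  have key : Φ₆ * (Matrix.of fun i c : Fin (2 * n + 1) => psiN z1 z2 z3 z4 n i.val c.val) =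
      F • (1 : Matrix (Fin (2 * n + 1)) (Fin (2 * n + 1)) (MvPolynomial (Fin 2) k)) := by
    ext1 i c
    rw [Matrix.mul_apply]
    simp only [Matrix.of_apply, Matrix.smul_apply, Matrix.one_apply, Fin.ext_iff, smul_eq_mul]
    obtain ⟨i, hi⟩ := i
    obtain ⟨c, hc⟩ := c
    simp only
    by_cases hl : i = 2 * n
    · rw [row_two (Φ₆ ⟨i, hi⟩) (fun t => psiN z1 z2 z3 z4 n t c) (2 * n - 1) (2 * n) (-z1) z2
        (by omega) (by omega) (by omega) (by intro j; simp [hΦ₆, hl])]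
      subst hF
      simp only [psiN]
      split_ifs <;> first | omega | contradiction | ring
    by_cases hi0 : i = 0
    · rw [row_one (Φ₆ ⟨i, hi⟩) (fun t => psiN z1 z2 z3 z4 n t c) 0 z3
        (by omega) (by intro j; rw [hΦ₆, hΦ₂]; simp only [if_neg hl, if_pos hi0])]
      subst hF
      simp only [psiN]
      split_ifs <;> first | omega | contradiction | ring
    by_cases hi1 : i = 1
    · rw [row_two (Φ₆ ⟨i, hi⟩) (fun t => psiN z1 z2 z3 z4 n t c) 0 1 (-z4) (z1 * z4)
        (by omega) (by omega) (by omega)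
        (by intro j; rw [hΦ₆, hΦ₂]; simp only [if_neg hl, if_neg hi0, if_pos hi1])]
      subst hF
      simp only [psiN]
      split_ifs <;> first | omega | contradiction | ring
    by_cases hi2 : i % 2 = 0
    · rw [row_two (Φ₆ ⟨i, hi⟩) (fun t => psiN z1 z2 z3 z4 n t c) (i - 1) i
        (-(z1 * z3)) (z2 * z3) (by omega) (by omega) (by omega)
        (by intro j; rw [hΦ₆, hΦ₂]
            simp only [if_neg hl, if_neg hi0, if_neg hi1, if_pos hi2])]
      subst hF
      simp only [psiN]
      split_ifs <;> first | omega | contradiction | ring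
    · rw [row_three (Φ₆ ⟨i, hi⟩) (fun t => psiN z1 z2 z3 z4 n t c) (i - 2) (i - 1) i
        (z1 * z4) (-(z2 * z4)) (z1 * z4) (by omega) (by omega) (by omega) (by omega)
        (by omega) (by omega)
        (by intro j; rw [hΦ₆, hΦ₂]
            simp only [if_neg hl, if_neg hi0, if_neg hi1, if_neg hi2])]
      subst hF
      simp only [psiN]
      split_ifs <;> first | omega | contradiction | ring
  exact ⟨_, key, mf_comm _ _ F hF0 key⟩
end
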